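/- arXiv:2003.07949 — 2 statements merged into one kernel-verified Lean document; each statement's English description precedes it below -/
import Mathlib

section
/- Let y(k) = C A^k x0 be the nominal output from an arbitrary initial state x0 ∈ ℝ^n. For every T0 ≥ ν + μ − 1, the choice N0 = ν attains the Hankel information bound: Rank(Y_{ν,T0}) = Γ({y(k)}), where ν and μ are the observability and excitability indices. -/
open Matrix

noncomputable section

/-- The observability matrix `O_N = [C; CA; …; CA^{N-1}]`, with block rows indexed by `Fin N`. -/
def obsMat {n p : ℕ} (A : Matrix (Fin n) (Fin n) ℝ) (C : Matrix (Fin p) (Fin n) ℝ)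
    (N : ℕ) : Matrix (Fin N × Fin p) (Fin n) ℝ :=
  fun ir j => (C * A ^ (ir.1 : ℕ)) ir.2 j

/-- The observability index `ν = min {N : Rank O_N = Rank O_{N+j} for all j}`. -/
def obsIndex {n p : ℕ} (A : Matrix (Fin n) (Fin n) ℝ) (C : Matrix (Fin p) (Fin n) ℝ) : ℕ :=
  sInf {N : ℕ | ∀ j : ℕ, (obsMat A C (N + j)).rank = (obsMat A C N).rank}

/-- The Krylov/excitability matrix `E_N(x) = [x, Ax, …, A^{N-1} x]`. -/
def excMat {n : ℕ} (A : Matrix (Fin n) (Fin n) ℝ) (x : Fin n → ℝ) (N : ℕ) :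
    Matrix (Fin n) (Fin N) ℝ :=
  fun i k => (A ^ (k : ℕ)).mulVec x i

/-- The excitability index at `x`: `μ(x) = min {i : Rank E_i(x) = Rank E_{i+j}(x) for all j}`. -/
def excIndexAt {n : ℕ} (A : Matrix (Fin n) (Fin n) ℝ) (x : Fin n → ℝ) : ℕ :=
  sInf {i : ℕ | ∀ j : ℕ, (excMat A x (i + j)).rank = (excMat A x i).rank}

/-- The excitability index `μ = max_{x ∈ ℝⁿ} μ(x)`. -/
def excIndex {n : ℕ} (A : Matrix (Fin n) (Fin n) ℝ) : ℕ :=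
  sSup (Set.range (excIndexAt A))

/-- The Hankel matrix `Y_{N,T}` of the nominal output `y(k) = C A^k x0`; its `j`-th column is
the stacked vector `(y(j), …, y(j+N-1))`. -/
def hankelMat {n p : ℕ} (A : Matrix (Fin n) (Fin n) ℝ) (C : Matrix (Fin p) (Fin n) ℝ)
    (x0 : Fin n → ℝ) (N T : ℕ) : Matrix (Fin N × Fin p) (Fin (T - N + 1)) ℝ :=
  fun ir j => (C * A ^ ((j : ℕ) + (ir.1 : ℕ))).mulVec x0 ir.2

/-- The Hankel information `Γ({y(k)}) = sup {Rank Y_{N,T} : N ≤ T}`. -/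
def hankelInfo {n p : ℕ} (A : Matrix (Fin n) (Fin n) ℝ) (C : Matrix (Fin p) (Fin n) ℝ)
    (x0 : Fin n → ℝ) : ℕ :=
  sSup {r : ℕ | ∃ N T : ℕ, N ≤ T ∧ r = (hankelMat A C x0 N T).rank}

theorem aux_fac {m k l : Type*} [Fintype m] [Fintype k] [Fintype l]
    (B : Matrix m k ℝ) (B' : Matrix m l ℝ) (f : l → k) (hf : ∀ i j, B' i j = B i (f j))
    (h : B.rank = B'.rank) : ∃ Q : Matrix l k ℝ, B = B' * Q := by
  classical
  have hle : Submodule.span ℝ (Set.range B'.col) ≤ Submodule.span ℝ (Set.range B.col) := by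
    apply Submodule.span_mono
    rintro _ ⟨j, rfl⟩
    exact ⟨f j, by ext i; simp [hf]⟩
  have heq := Submodule.eq_of_le_of_finrank_eq hle (by
    rw [← Matrix.rank_eq_finrank_span_cols, ← Matrix.rank_eq_finrank_span_cols, h])
  have hmem : ∀ j, ∃ c : l → ℝ, ∑ i, c i • B'.col i = B.col j := by
    intro j
    rw [← Submodule.mem_span_range_iff_exists_fun, heq]
    exact Submodule.subset_span ⟨j, rfl⟩
  choose c hc using hmem
  refine ⟨Matrix.of fun a b => c b a, ?_⟩
  ext i j
  have := congrFun (hc j) i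
  simp only [Finset.sum_apply, Pi.smul_apply, Matrix.col_apply, smul_eq_mul] at this
  rw [← this, Matrix.mul_apply]
  exact Finset.sum_congr rfl fun _ _ => mul_comm _ _

theorem aux_sel {m k l : Type*} [Fintype m] [Fintype k] [Fintype l]
    (B : Matrix m k ℝ) (B' : Matrix m l ℝ) (f : l → k) (hf : ∀ i j, B' i j = B i (f j)) :
    ∃ Q : Matrix k l ℝ, B' = B * Q := by
  classical
  refine ⟨Matrix.of fun a b => if a = f b then 1 else 0, ?_⟩
  ext i j
  simp [Matrix.mul_apply, hf]

theorem aux_exc_sel {n : ℕ} (A : Matrix (Fin n) (Fin n) ℝ) (x : Fin n → ℝ) {a b : ℕ}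
    (h : a ≤ b) : ∃ Q : Matrix (Fin b) (Fin a) ℝ, excMat A x a = excMat A x b * Q :=
  aux_sel _ _ (Fin.castLE h) (fun _ _ => rfl)

theorem aux_exc_le {n : ℕ} (A : Matrix (Fin n) (Fin n) ℝ) (x : Fin n → ℝ) (j : ℕ) :
    (excMat A x (n + j)).rank = (excMat A x n).rank := by
  apply le_antisymm
  · have hmem : ∀ k : ℕ, ∃ c : Fin n → ℝ, ∀ i, ((A ^ k).mulVec x) i
        = ∑ l : Fin n, (A ^ (l : ℕ)).mulVec x i * c l := by
      intro k
      rcases Nat.eq_zero_or_pos n with h0 | hn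
      · subst h0
        exact ⟨0, fun i => i.elim0⟩
      have : Nonempty (Fin n) := ⟨⟨0, hn⟩⟩
      refine ⟨fun l => (Polynomial.X ^ k %ₘ A.charpoly).coeff l, fun i => ?_⟩
      have hd : (Polynomial.X ^ k %ₘ A.charpoly).natDegree < n := by
        have := Polynomial.natDegree_modByMonic_lt (Polynomial.X ^ k) A.charpoly_monic (by
          intro h
          have h2 := A.charpoly_natDegree_eq_dim
          rw [h] at h2
          simp at h2
          omega)
        rwa [A.charpoly_natDegree_eq_dim, Fintype.card_fin] at this
      rw [Matrix.pow_eq_aeval_mod_charpoly A k, Polynomial.aeval_eq_sum_range' hd,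
        Finset.sum_range, Matrix.sum_mulVec, Finset.sum_apply]
      refine Finset.sum_congr rfl fun l _ => ?_
      rw [Matrix.smul_mulVec, Pi.smul_apply, smul_eq_mul, mul_comm]
    choose c hc using hmem
    have : excMat A x (n + j) = excMat A x n * (Matrix.of fun (l : Fin n) (k : Fin (n + j)) => c k l) := by
      ext i k
      rw [Matrix.mul_apply]
      exact hc k i
    rw [this]
    exact Matrix.rank_mul_le_left _ _
  · obtain ⟨Q, hQ⟩ := aux_exc_sel A x (Nat.le_add_right n j)
    rw [hQ]
    exact Matrix.rank_mul_le_left _ _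

theorem aux_exc_at_le {n : ℕ} (A : Matrix (Fin n) (Fin n) ℝ) (x : Fin n → ℝ) :
    excIndexAt A x ≤ excIndex A := by
  refine le_csSup ⟨n, ?_⟩ ⟨x, rfl⟩
  rintro _ ⟨y, rfl⟩
  exact Nat.sInf_le (aux_exc_le A y)

theorem aux_exc_fac {n : ℕ} (A : Matrix (Fin n) (Fin n) ℝ) (x : Fin n → ℝ) (M M' : ℕ)
    (h : excIndexAt A x ≤ M') : ∃ Q : Matrix (Fin M') (Fin M) ℝ, excMat A x M = excMat A x M' * Q := by
  have hs : excIndexAt A x ∈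
      {i : ℕ | ∀ j : ℕ, (excMat A x (i + j)).rank = (excMat A x i).rank} :=
    Nat.sInf_mem ⟨n, aux_exc_le A x⟩
  obtain ⟨Q1, h1⟩ := aux_exc_sel A x (Nat.le_add_left M (excIndexAt A x))
  obtain ⟨Q2, h2⟩ := aux_fac _ (excMat A x (excIndexAt A x))
    (Fin.castLE (Nat.le_add_right _ M)) (fun _ _ => rfl) (hs M)
  obtain ⟨Q3, h3⟩ := aux_exc_sel A x h
  refine ⟨Q3 * Q2 * Q1, ?_⟩
  rw [h1, h2, h3]
  simp only [Matrix.mul_assoc]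

theorem aux_obs_sel {n p : ℕ} (A : Matrix (Fin n) (Fin n) ℝ) (C : Matrix (Fin p) (Fin n) ℝ)
    {a b : ℕ} (h : a ≤ b) : ∃ Q : Matrix (Fin b × Fin p) (Fin a × Fin p) ℝ, (obsMat A C a)ᵀ = (obsMat A C b)ᵀ * Q :=
  aux_sel _ _ (Prod.map (Fin.castLE h) id) (fun _ _ => rfl)

theorem aux_obs_mono {n p : ℕ} (A : Matrix (Fin n) (Fin n) ℝ) (C : Matrix (Fin p) (Fin n) ℝ)
    {a b : ℕ} (h : a ≤ b) : (obsMat A C a).rank ≤ (obsMat A C b).rank := by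
  obtain ⟨Q, hQ⟩ := aux_obs_sel A C h
  rw [← Matrix.rank_transpose, ← Matrix.rank_transpose (obsMat A C b), hQ]
  exact Matrix.rank_mul_le_left _ _

theorem aux_obs_fac {n p : ℕ} (A : Matrix (Fin n) (Fin n) ℝ) (C : Matrix (Fin p) (Fin n) ℝ)
    (N : ℕ) : ∃ P : Matrix (Fin N × Fin p) (Fin (obsIndex A C) × Fin p) ℝ, obsMat A C N = P * obsMat A C (obsIndex A C) := by
  have hne : {N : ℕ | ∀ j : ℕ, (obsMat A C (N + j)).rank = (obsMat A C N).rank}.Nonempty := by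
    have hb : BddAbove (Set.range fun N => (obsMat A C N).rank) := by
      refine ⟨n, ?_⟩
      rintro _ ⟨N, rfl⟩
      simpa using Matrix.rank_le_card_width (obsMat A C N)
    obtain ⟨N, hN⟩ := Nat.sSup_mem (Set.range_nonempty _) hb
    refine ⟨N, fun j => le_antisymm ?_ (aux_obs_mono A C (Nat.le_add_right _ _))⟩
    have := le_csSup hb ⟨N + j, rfl⟩
    rw [← hN] at this
    exact this
  have hs := Nat.sInf_mem hne
  change obsIndex A C ∈ _ at hs
  obtain ⟨Q1, h1⟩ := aux_obs_sel A C (Nat.le_add_left N (obsIndex A C))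
  obtain ⟨Q2, h2⟩ := aux_fac (obsMat A C (obsIndex A C + N))ᵀ (obsMat A C (obsIndex A C))ᵀ
    (Prod.map (Fin.castLE (Nat.le_add_right _ N)) id)
    (fun _ _ => rfl) (by rw [Matrix.rank_transpose, Matrix.rank_transpose]; exact hs N)
  refine ⟨(Q2 * Q1)ᵀ, ?_⟩
  apply Matrix.transpose_injective
  rw [Matrix.transpose_mul, Matrix.transpose_transpose, h1, h2, Matrix.mul_assoc]

theorem aux_hankel {n p : ℕ} (A : Matrix (Fin n) (Fin n) ℝ) (C : Matrix (Fin p) (Fin n) ℝ)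
    (x0 : Fin n → ℝ) (N T : ℕ) :
    hankelMat A C x0 N T = obsMat A C N * excMat A x0 (T - N + 1) := by
  ext ⟨i, r⟩ j
  have h : C * A ^ ((j : ℕ) + (i : ℕ)) = (C * A ^ (i : ℕ)) * A ^ (j : ℕ) := by
    rw [Matrix.mul_assoc, ← pow_add, add_comm]
  simp only [hankelMat]
  rw [h, ← Matrix.mulVec_mulVec]
  rfl

/-- For every initial state `x0` and every `T0 ≥ ν + μ − 1`, the choice `N0 = ν` attains
the Hankel information bound: `Rank Y_{ν,T0} = Γ({y(k)})`. -/
theorem obsIndex_attains_hankelInfo {n p : ℕ}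
    (A : Matrix (Fin n) (Fin n) ℝ) (C : Matrix (Fin p) (Fin n) ℝ) (x0 : Fin n → ℝ)
    (T0 : ℕ) (hT0 : obsIndex A C + excIndex A - 1 ≤ T0) :
    (hankelMat A C x0 (obsIndex A C) T0).rank = hankelInfo A C x0 := by
  have hub : ∀ N T : ℕ, (hankelMat A C x0 N T).rank ≤
      (hankelMat A C x0 (obsIndex A C) T0).rank := by
    intro N T
    rw [aux_hankel, aux_hankel]
    obtain ⟨P, hP⟩ := aux_obs_fac A C N
    obtain ⟨Q, hQ⟩ := aux_exc_fac A x0 (T - N + 1) (T0 - obsIndex A C + 1) (by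
      have := aux_exc_at_le A x0
      omega)
    rw [hP, hQ, Matrix.mul_assoc, ← Matrix.mul_assoc (obsMat A C (obsIndex A C))]
    exact (Matrix.rank_mul_le_right _ _).trans (Matrix.rank_mul_le_left _ _)
  apply le_antisymm
  · refine le_csSup ⟨(hankelMat A C x0 (obsIndex A C) T0).rank, ?_⟩
      ⟨obsIndex A C, max T0 (obsIndex A C), le_max_right _ _, ?_⟩
    · rintro _ ⟨N, T, -, rfl⟩
      exact hub N T
    · have h : max T0 (obsIndex A C) - obsIndex A C = T0 - obsIndex A C := by omega
      rw [aux_hankel, aux_hankel, h]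
  · refine csSup_le ⟨_, 0, 0, le_rfl, rfl⟩ ?_
    rintro _ ⟨N, T, -, rfl⟩
    exact hub N T
end
end

section
/- Let y(k) = C A^k x0 be the nominal output, let N ≥ ν and T ≥ N + μ − 1, and let S be any matrix with orthonormal columns whose column space equals the column space of the Hankel matrix Y_{N,T}. Define w(k) = S^⊤ (y(k), …, y(k+N−1)) for all k ∈ ℕ, and let W = [w(0), …, w(T−N)] and W⃗ = [w(1), …, w(T−N+1)]. Then there exists a matrix M with M W = W⃗ (so the minimum over M of the Frobenius norm ‖W⃗ − M W‖_F equals 0), and every matrix M satisfying M W = W⃗ also satisfies w(k+1) = M w(k) for all k ∈ ℕ. -/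
open Matrix

noncomputable section

/-- The stacked nominal output vector `y_{k:k+N-1} = (y(k), …, y(k+N-1))`. -/
def nomStack {n p : ℕ} (A : Matrix (Fin n) (Fin n) ℝ) (C : Matrix (Fin p) (Fin n) ℝ)
    (x0 : Fin n → ℝ) (N k : ℕ) : Fin N × Fin p → ℝ :=
  fun ir => (C * A ^ (k + (ir.1 : ℕ))).mulVec x0 ir.2

theorem aux_pow {n : ℕ} (A : Matrix (Fin n) (Fin n) ℝ) (k : ℕ) :
    ∃ c : ℕ → ℝ, A ^ k = ∑ j ∈ Finset.range n, c j • A ^ j := by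
  rcases Nat.eq_zero_or_pos n with h | h
  · subst h
    exact ⟨0, Subsingleton.elim _ _⟩
  · refine ⟨fun j => (Polynomial.X ^ k %ₘ A.charpoly).coeff j, ?_⟩
    rw [Matrix.pow_eq_aeval_mod_charpoly, Polynomial.aeval_eq_sum_range' (n := n)]
    have h1 : A.charpoly.natDegree = n := by
      simp
    have h2 := Polynomial.natDegree_modByMonic_lt (Polynomial.X ^ k) A.charpoly_monic
      (by intro h3; rw [h3] at h1; simp at h1; omega)
    omega

theorem exc_range {n : ℕ} (A : Matrix (Fin n) (Fin n) ℝ) (x : Fin n → ℝ) (N : ℕ) :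
    LinearMap.range (excMat A x N).mulVecLin =
      Submodule.span ℝ (Set.range fun k : Fin N => (A ^ (k : ℕ)).mulVec x) := by
  rw [Matrix.range_mulVecLin]
  rfl

theorem exc_mono {n : ℕ} (A : Matrix (Fin n) (Fin n) ℝ) (x : Fin n → ℝ) {N N' : ℕ} (h : N ≤ N') :
    LinearMap.range (excMat A x N).mulVecLin ≤ LinearMap.range (excMat A x N').mulVecLin := by
  rw [exc_range, exc_range]
  apply Submodule.span_mono
  rintro _ ⟨k, rfl⟩
  exact ⟨⟨k, by omega⟩, rfl⟩

theorem exc_mem {n : ℕ} (A : Matrix (Fin n) (Fin n) ℝ) (x : Fin n → ℝ) {N k : ℕ} (h : k < N) :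
    (A ^ k).mulVec x ∈ LinearMap.range (excMat A x N).mulVecLin := by
  rw [exc_range]
  exact Submodule.subset_span ⟨⟨k, h⟩, rfl⟩

theorem exc_n {n : ℕ} (A : Matrix (Fin n) (Fin n) ℝ) (x : Fin n → ℝ) (k : ℕ) :
    (A ^ k).mulVec x ∈ LinearMap.range (excMat A x n).mulVecLin := by
  obtain ⟨c, hc⟩ := aux_pow A k
  rw [hc, Matrix.sum_mulVec]
  refine Submodule.sum_mem _ fun j hj => ?_
  rw [Matrix.smul_mulVec]
  exact Submodule.smul_mem _ _ (exc_mem A x (Finset.mem_range.1 hj))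

theorem exc_n_set {n : ℕ} (A : Matrix (Fin n) (Fin n) ℝ) (x : Fin n → ℝ) :
    n ∈ {i : ℕ | ∀ j : ℕ, (excMat A x (i + j)).rank = (excMat A x i).rank} := by
  intro j
  have : LinearMap.range (excMat A x (n + j)).mulVecLin =
      LinearMap.range (excMat A x n).mulVecLin := by
    apply le_antisymm _ (exc_mono A x (Nat.le_add_right _ _))
    rw [exc_range A x (n + j), Submodule.span_le]
    rintro _ ⟨k, rfl⟩
    exact exc_n A x k
  unfold Matrix.rank
  rw [this]

theorem exc_all {n : ℕ} (A : Matrix (Fin n) (Fin n) ℝ) (x : Fin n → ℝ) {L : ℕ}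
    (hL : excIndex A ≤ L) (k : ℕ) :
    (A ^ k).mulVec x ∈ LinearMap.range (excMat A x L).mulVecLin := by
  have h1 : excIndexAt A x ≤ excIndex A := by
    apply le_csSup
    · refine ⟨n, ?_⟩
      rintro _ ⟨y, rfl⟩
      exact Nat.sInf_le (exc_n_set A y)
    · exact ⟨x, rfl⟩
  have h2 := Nat.sInf_mem ⟨n, exc_n_set A x⟩
  apply exc_mono A x (h1.trans hL)
  have h3 := Submodule.eq_of_le_of_finrank_eq
    (exc_mono A x (Nat.le_add_right (excIndexAt A x) (k + 1))) (h2 (k + 1)).symm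
  rw [h3]
  exact exc_mem A x (by omega)

theorem obs_ker {n p : ℕ} (A : Matrix (Fin n) (Fin n) ℝ) (C : Matrix (Fin p) (Fin n) ℝ)
    (N : ℕ) (v : Fin n → ℝ) :
    v ∈ LinearMap.ker (obsMat A C N).mulVecLin ↔ ∀ k < N, (C * A ^ k).mulVec v = 0 := by
  rw [LinearMap.mem_ker, Matrix.mulVecLin_apply]
  constructor
  · intro h k hk
    funext r
    exact congrFun h (⟨k, hk⟩, r)
  · intro h
    funext ir
    exact congrFun (h ir.1 ir.1.2) ir.2

theorem obs_mono {n p : ℕ} (A : Matrix (Fin n) (Fin n) ℝ) (C : Matrix (Fin p) (Fin n) ℝ)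
    {N N' : ℕ} (h : N ≤ N') :
    LinearMap.ker (obsMat A C N').mulVecLin ≤ LinearMap.ker (obsMat A C N).mulVecLin := by
  intro v hv
  rw [obs_ker] at *
  exact fun k hk => hv k (by omega)

theorem obs_n_set {n p : ℕ} (A : Matrix (Fin n) (Fin n) ℝ) (C : Matrix (Fin p) (Fin n) ℝ) :
    n ∈ {N : ℕ | ∀ j : ℕ, (obsMat A C (N + j)).rank = (obsMat A C N).rank} := by
  intro j
  have : LinearMap.ker (obsMat A C (n + j)).mulVecLin =
      LinearMap.ker (obsMat A C n).mulVecLin := by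
    apply le_antisymm (obs_mono A C (Nat.le_add_right _ _))
    intro v hv
    rw [obs_ker] at *
    intro k _
    obtain ⟨c, hc⟩ := aux_pow A k
    rw [hc, Matrix.mul_sum, Matrix.sum_mulVec]
    refine Finset.sum_eq_zero fun i hi => ?_
    rw [Matrix.mul_smul, Matrix.smul_mulVec, hv i (Finset.mem_range.1 hi), smul_zero]
  have h1 := (obsMat A C (n + j)).mulVecLin.finrank_range_add_finrank_ker
  have h2 := (obsMat A C n).mulVecLin.finrank_range_add_finrank_ker
  unfold Matrix.rank
  rw [this] at h1
  omega

theorem obs_all {n p : ℕ} (A : Matrix (Fin n) (Fin n) ℝ) (C : Matrix (Fin p) (Fin n) ℝ)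
    {N : ℕ} (hN : obsIndex A C ≤ N) (v : Fin n → ℝ) (hv : (obsMat A C N).mulVec v = 0) (k : ℕ) :
    (C * A ^ k).mulVec v = 0 := by
  have h2 := Nat.sInf_mem ⟨n, obs_n_set A C⟩ (k + 1)
  change (obsMat A C (obsIndex A C + (k + 1))).rank = (obsMat A C (obsIndex A C)).rank at h2
  have h3 := (obsMat A C (obsIndex A C + (k + 1))).mulVecLin.finrank_range_add_finrank_ker
  have h4 := (obsMat A C (obsIndex A C)).mulVecLin.finrank_range_add_finrank_ker
  unfold Matrix.rank at h2
  have h5 := Submodule.eq_of_le_of_finrank_eq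
    (obs_mono A C (Nat.le_add_right (obsIndex A C) (k + 1))) (by omega)
  have h6 : v ∈ LinearMap.ker (obsMat A C (obsIndex A C)).mulVecLin :=
    obs_mono A C hN (LinearMap.mem_ker.2 hv)
  rw [← h5, obs_ker] at h6
  exact h6 k (by omega)

/-- **Data-driven feature space dynamics.** For `N ≥ ν` and `T ≥ N + μ − 1`, if `S` has
orthonormal columns spanning `Col Y_{N,T}`, `w(k) = Sᵀ y_{k:k+N-1}`,
`W = [w(0), …, w(T−N)]` and `W⃗ = [w(1), …, w(T−N+1)]`, then there exists `M` with
`M W = W⃗` (so `min_M ‖W⃗ − M W‖_F = 0`), and every `M` with `M W = W⃗` satisfies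
`w(k+1) = M w(k)` for all `k ∈ ℕ`. -/
theorem data_driven_feature_space_dynamics {n p q : ℕ}
    (A : Matrix (Fin n) (Fin n) ℝ) (C : Matrix (Fin p) (Fin n) ℝ) (x0 : Fin n → ℝ)
    (N T : ℕ) (hN : obsIndex A C ≤ N) (hT : N + excIndex A - 1 ≤ T)
    (S : Matrix (Fin N × Fin p) (Fin q) ℝ)
    (hortho : Sᵀ * S = 1)
    (hcol : LinearMap.range S.mulVecLin = LinearMap.range (hankelMat A C x0 N T).mulVecLin)
    (w : ℕ → Fin q → ℝ)
    (hw : ∀ k : ℕ, w k = Sᵀ.mulVec (nomStack A C x0 N k))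
    (W Wvec : Matrix (Fin q) (Fin (T - N + 1)) ℝ)
    (hW : ∀ i j, W i j = w (j : ℕ) i)
    (hWvec : ∀ i j, Wvec i j = w ((j : ℕ) + 1) i) :
    (∃ M : Matrix (Fin q) (Fin q) ℝ, M * W = Wvec) ∧
    (∀ M : Matrix (Fin q) (Fin q) ℝ, M * W = Wvec →
      ∀ k : ℕ, w (k + 1) = M.mulVec (w k)) := by
  have hstack : ∀ k, nomStack A C x0 N k = (obsMat A C N).mulVec ((A ^ k).mulVec x0) := by
    intro k
    funext ir
    have : (obsMat A C N).mulVec ((A ^ k).mulVec x0) ir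
        = (C * A ^ (ir.1 : ℕ)).mulVec ((A ^ k).mulVec x0) ir.2 := rfl
    rw [this, Matrix.mulVec_mulVec, Matrix.mul_assoc, ← pow_add, add_comm]
    rfl
  have hL : excIndex A ≤ (T - N + 1) := by omega
  have hE : ∀ j : Fin (T - N + 1), (excMat A x0 (T - N + 1)).col j = (A ^ (j : ℕ)).mulVec x0 := fun j => rfl
  have hY : hankelMat A C x0 N T = obsMat A C N * excMat A x0 (T - N + 1) := by
    ext ir j
    exact congrFun (hstack j) ir
  have hWE : W = Sᵀ * (obsMat A C N * excMat A x0 (T - N + 1)) := by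
    ext i j
    rw [hW, hw, ← hY]
    rfl
  have hVE : Wvec = Sᵀ * (obsMat A C N * (A * excMat A x0 (T - N + 1))) := by
    ext i j
    rw [hWvec, hw, hstack, pow_succ', ← Matrix.mulVec_mulVec]
    rfl
  have hSS : ∀ z, S.mulVec (W.mulVec z) = (obsMat A C N).mulVec ((excMat A x0 (T - N + 1)).mulVec z) := by
    intro z
    have hz : (hankelMat A C x0 N T).mulVec z ∈ LinearMap.range S.mulVecLin := by
      rw [hcol]; exact ⟨z, rfl⟩
    obtain ⟨u, hu⟩ := hz
    rw [Matrix.mulVecLin_apply, hY, ← Matrix.mulVec_mulVec] at hu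
    rw [hWE, ← Matrix.mulVec_mulVec, ← Matrix.mulVec_mulVec, ← hu, Matrix.mulVec_mulVec u Sᵀ,
      hortho, Matrix.one_mulVec]
  have hker : ∀ z, W.mulVec z = 0 → Wvec.mulVec z = 0 := by
    intro z hz
    have h1 := hSS z
    rw [hz, Matrix.mulVec_zero] at h1
    have h2 : (obsMat A C N).mulVec (A.mulVec ((excMat A x0 (T - N + 1)).mulVec z)) = 0 := by
      have := (obs_ker A C N (A.mulVec ((excMat A x0 (T - N + 1)).mulVec z))).2 (fun k _ => by
        rw [Matrix.mulVec_mulVec, Matrix.mul_assoc, ← pow_succ]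
        exact obs_all A C hN _ h1.symm (k + 1))
      exact this
    rw [hVE, ← Matrix.mulVec_mulVec, ← Matrix.mulVec_mulVec, ← Matrix.mulVec_mulVec, h2,
      Matrix.mulVec_zero]
  have hsurj : Function.Surjective W.mulVec := by
    intro u
    have hu : S.mulVec u ∈ LinearMap.range (hankelMat A C x0 N T).mulVecLin := by
      rw [← hcol]; exact ⟨u, rfl⟩
    obtain ⟨z, hz⟩ := hu
    refine ⟨z, ?_⟩
    rw [Matrix.mulVecLin_apply] at hz
    rw [hWE, ← hY, ← Matrix.mulVec_mulVec, hz, Matrix.mulVec_mulVec, hortho, Matrix.one_mulVec]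
  constructor
  · obtain ⟨D, hD⟩ := Matrix.mulVec_surjective_iff_exists_right_inverse.1 hsurj
    refine ⟨Wvec * D, ?_⟩
    apply Matrix.ext_of_mulVec_single
    intro j
    set e : Fin (T - N + 1) → ℝ := Pi.single j 1
    have h := hker (D.mulVec (W.mulVec e) - e) (by
      rw [Matrix.mulVec_sub, Matrix.mulVec_mulVec, hD, Matrix.one_mulVec, sub_self])
    rw [Matrix.mulVec_sub, sub_eq_zero] at h
    rw [← Matrix.mulVec_mulVec, ← Matrix.mulVec_mulVec, h]
  · intro M hM k
    obtain ⟨z, hz⟩ := exc_all A x0 hL k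
    rw [Matrix.mulVecLin_apply] at hz
    have h1 : w k = W.mulVec z := by
      rw [hw, hstack, hWE, ← Matrix.mulVec_mulVec, ← Matrix.mulVec_mulVec, hz]
    have h2 : w (k + 1) = Wvec.mulVec z := by
      rw [hw, hstack, hVE, ← Matrix.mulVec_mulVec, ← Matrix.mulVec_mulVec,
        ← Matrix.mulVec_mulVec, hz, Matrix.mulVec_mulVec _ A, ← pow_succ']
    rw [h1, h2, Matrix.mulVec_mulVec, hM]
end
end
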